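/- arXiv:2111.12883 — 2 statements merged into one kernel-verified Lean document; each statement's English description precedes it below -/
import Mathlib

section
/- Let r, θ, γ, φ be real numbers with γ > 0, γ² > r² sin²θ, φ ∈ (−π/2, π/2) and sin φ = (r/γ) sin θ, and let H = [[r e^{iθ}, γ], [γ, r e^{−iθ}]]. Then H has the two real eigenvalues λ± = r cos θ ± γ cos φ = r cos θ ± √(γ² − r² sin²θ), with eigenvectors e₊ = (1/√2)·(e^{iφ/2}, e^{−iφ/2})ᵀ and e₋ = (1/√2)·(i e^{−iφ/2}, −i e^{iφ/2})ᵀ, i.e. H e₊ = λ₊ e₊ and H e₋ = λ₋ e₋. -/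
/-- Example 3.4: the non-Hermitian matrix `H = [[r e^{iθ}, γ], [γ, r e^{−iθ}]]` with
`γ² > r² sin²θ` and `sin φ = (r/γ) sin θ`, `|φ| < π/2`, has the two real eigenvalues
`λ± = r cos θ ± γ cos φ = r cos θ ± √(γ² − r² sin²θ)` with eigenvectors
`e₊ = (1/√2)(e^{iφ/2}, e^{−iφ/2})ᵀ` and `e₋ = (1/√2)(i e^{−iφ/2}, −i e^{iφ/2})ᵀ`. -/
theorem nonHermitian_qubit_eigenvalues
    (r θ γ φ : ℝ) (hγ : 0 < γ)
    (hgap : r ^ 2 * Real.sin θ ^ 2 < γ ^ 2)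
    (hφ₁ : -(Real.pi / 2) < φ) (hφ₂ : φ < Real.pi / 2)
    (hsinφ : Real.sin φ = (r / γ) * Real.sin θ)
    (Hm : Matrix (Fin 2) (Fin 2) ℂ)
    (hH : Hm = !![(r : ℂ) * Complex.exp (Complex.I * (θ : ℂ)), (γ : ℂ);
                  (γ : ℂ), (r : ℂ) * Complex.exp (-Complex.I * (θ : ℂ))]) :
    Real.sqrt (γ ^ 2 - r ^ 2 * Real.sin θ ^ 2) = γ * Real.cos φ ∧
    Hm.mulVec ((((Real.sqrt 2)⁻¹ : ℝ) : ℂ) •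
        ![Complex.exp (Complex.I * ((φ / 2 : ℝ) : ℂ)),
          Complex.exp (-Complex.I * ((φ / 2 : ℝ) : ℂ))])
      = (((r * Real.cos θ + γ * Real.cos φ : ℝ) : ℂ)) •
        ((((Real.sqrt 2)⁻¹ : ℝ) : ℂ) •
          ![Complex.exp (Complex.I * ((φ / 2 : ℝ) : ℂ)),
            Complex.exp (-Complex.I * ((φ / 2 : ℝ) : ℂ))]) ∧
    Hm.mulVec ((((Real.sqrt 2)⁻¹ : ℝ) : ℂ) •
        ![Complex.I * Complex.exp (-Complex.I * ((φ / 2 : ℝ) : ℂ)),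
          -Complex.I * Complex.exp (Complex.I * ((φ / 2 : ℝ) : ℂ))])
      = (((r * Real.cos θ - γ * Real.cos φ : ℝ) : ℂ)) •
        ((((Real.sqrt 2)⁻¹ : ℝ) : ℂ) •
          ![Complex.I * Complex.exp (-Complex.I * ((φ / 2 : ℝ) : ℂ)),
            -Complex.I * Complex.exp (Complex.I * ((φ / 2 : ℝ) : ℂ))]) := by
  have hrs : r * Real.sin θ = γ * Real.sin φ := by
    rw [hsinφ]; field_simp
  have hcos : 0 < Real.cos φ := Real.cos_pos_of_mem_Ioo ⟨by linarith, hφ₂⟩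
  have hsq : γ ^ 2 - r ^ 2 * Real.sin θ ^ 2 = (γ * Real.cos φ) ^ 2 := by
    have h1 := Real.sin_sq_add_cos_sq φ
    linear_combination (-(r * Real.sin θ) - γ * Real.sin φ) * hrs - γ ^ 2 * h1
  have hrsC : (r : ℂ) * Complex.sin θ = γ * Complex.sin φ := by
    exact_mod_cast hrs
  have hE : Complex.exp (Complex.I * (θ : ℂ)) = Complex.cos θ + Complex.sin θ * Complex.I := by
    rw [mul_comm, Complex.exp_mul_I]
  have hE' : Complex.exp (-Complex.I * (θ : ℂ)) = Complex.cos θ - Complex.sin θ * Complex.I := by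
    rw [show -Complex.I * (θ : ℂ) = (-(θ : ℂ)) * Complex.I by ring, Complex.exp_mul_I,
      Complex.cos_neg, Complex.sin_neg]
    ring
  have hab : Complex.exp (Complex.I * ((φ / 2 : ℝ) : ℂ)) *
      Complex.exp (-Complex.I * ((φ / 2 : ℝ) : ℂ)) = 1 := by
    rw [← Complex.exp_add, ← Complex.exp_zero]; congr 1; ring
  have ha2 : Complex.exp (Complex.I * ((φ / 2 : ℝ) : ℂ)) ^ 2
      = Complex.cos φ + Complex.sin φ * Complex.I := by
    rw [← Complex.exp_mul_I, ← Complex.exp_nat_mul]; congr 1; push_cast; ring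
  have hb2 : Complex.exp (-Complex.I * ((φ / 2 : ℝ) : ℂ)) ^ 2
      = Complex.cos φ - Complex.sin φ * Complex.I := by
    rw [sub_eq_add_neg, ← neg_mul, ← Complex.cos_neg, ← Complex.sin_neg,
      ← Complex.exp_mul_I, ← Complex.exp_nat_mul]
    congr 1; push_cast; ring
  refine ⟨by rw [hsq]; exact Real.sqrt_sq (by positivity), ?_, ?_⟩
  all_goals
    subst hH
    rw [Matrix.mulVec_smul, smul_comm]
    congr 1
    rw [hE, hE']
    generalize Complex.exp (Complex.I * ((φ / 2 : ℝ) : ℂ)) = a at *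
    generalize Complex.exp (-Complex.I * ((φ / 2 : ℝ) : ℂ)) = b at *
    ext i
    fin_cases i <;>
      simp only [Matrix.mulVec, dotProduct, Fin.sum_univ_two, Matrix.of_apply, Matrix.cons_val_zero,
        Matrix.cons_val_one, Matrix.cons_val', Pi.smul_apply, smul_eq_mul, Fin.zero_eta,
        Fin.mk_one, Matrix.cons_val_fin_one] <;>
      push_cast
  · linear_combination Complex.I * a * hrsC - γ * b * hab + γ * a * hb2
  · linear_combination -Complex.I * b * hrsC - γ * a * hab + γ * b * ha2
  · linear_combination Complex.I * (Complex.I * b * hrsC + γ * a * hab - γ * b * ha2)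
  · linear_combination -Complex.I * (-Complex.I * a * hrsC + γ * b * hab - γ * a * hb2)
end

section
/- Let ω be a real number with −π/2 < ω < π/2, let σᶻ_ω = (1/cos ω)·[[1, i sin ω], [i sin ω, −1]], and let G = (1/cos²ω)·[[1, i sin ω], [−i sin ω, 1]]. Then G is Hermitian positive-definite, and for every Hermitian positive-definite matrix S with S² = G one has S σᶻ_ω S⁻¹ = [[1, 0], [0, −1]]; in particular σᶻ_ω is a para-Hermitian matrix with eigenvalues 1 and −1. -/
open Matrix

open scoped ComplexOrder

/-- Example 3.3 for `σᶻ_ω`: the matrix `G = (1/cos²ω)[[1, i sin ω],[−i sin ω, 1]]` is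
Hermitian positive-definite, and for every Hermitian positive-definite `S` with `S² = G`
one has `S σᶻ_ω S⁻¹ = diag(1, −1)`; in particular `σᶻ_ω` is para-Hermitian with
eigenvalues `1` and `−1`. -/
theorem deformed_pauli_z_paraHermitian
    (ω : ℝ) (hω₁ : -(Real.pi / 2) < ω) (hω₂ : ω < Real.pi / 2)
    (σz G : Matrix (Fin 2) (Fin 2) ℂ)
    (hz : σz = (((Real.cos ω)⁻¹ : ℝ) : ℂ) •
        !![1, Complex.I * ((Real.sin ω : ℝ) : ℂ); Complex.I * ((Real.sin ω : ℝ) : ℂ), -1])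
    (hG : G = ((((Real.cos ω) ^ 2)⁻¹ : ℝ) : ℂ) •
        !![1, Complex.I * ((Real.sin ω : ℝ) : ℂ); -Complex.I * ((Real.sin ω : ℝ) : ℂ), 1]) :
    G.IsHermitian ∧ G.PosDef ∧
    (∀ S : Matrix (Fin 2) (Fin 2) ℂ, S.IsHermitian → S.PosDef → S * S = G →
      S * σz * S⁻¹ = !![1, 0; 0, -1]) ∧
    (∃ v : Fin 2 → ℂ, v ≠ 0 ∧ σz.mulVec v = v) ∧
    (∃ w : Fin 2 → ℂ, w ≠ 0 ∧ σz.mulVec w = -w) := by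
  have hc : 0 < Real.cos ω := Real.cos_pos_of_mem_Ioo ⟨hω₁, hω₂⟩
  have hsc : Real.sin ω ^ 2 + Real.cos ω ^ 2 = 1 := Real.sin_sq_add_cos_sq ω
  generalize Real.cos ω = c at *
  generalize Real.sin ω = s at *
  have hcC : (c : ℂ) ≠ 0 := by exact_mod_cast hc.ne'
  have hscC : (s : ℂ) ^ 2 + (c : ℂ) ^ 2 = 1 := by exact_mod_cast hsc
  have hI : Complex.I ^ 2 = -1 := Complex.I_sq
  have hGB : G = ((c⁻¹ : ℝ) : ℂ) ^ 2 •
      ((!![1, Complex.I * s; 0, c] : Matrix (Fin 2) (Fin 2) ℂ)ᴴ * !![1, Complex.I * s; 0, c]) := by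
    rw [hG]
    ext i j
    fin_cases i <;> fin_cases j <;>
      simp [Matrix.mul_apply, Fin.sum_univ_two, Matrix.conjTranspose_apply]
    linear_combination ((c : ℂ) ^ 2)⁻¹ * (-hscC + (s : ℂ) ^ 2 * hI)
  have hpd : G.PosDef := by
    rw [hGB]
    refine Matrix.PosDef.smul ?_ ?_
    · refine Matrix.PosDef.conjTranspose_mul_self _ ?_
      refine Matrix.mulVec_injective_of_isUnit ?_
      rw [Matrix.isUnit_iff_isUnit_det]
      simp [Matrix.det_fin_two, hcC]
    · have : (0 : ℝ) < (c⁻¹) ^ 2 := by positivity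
      exact_mod_cast this
  refine ⟨hpd.isHermitian, hpd, ?_, ?_, ?_⟩
  · intro S hS hSp hSS
    have hdet : IsUnit S.det := hSp.det_pos.ne'.isUnit
    suffices h : S * σz = !![1, 0; 0, -1] * S by
      rw [h, Matrix.mul_assoc, Matrix.mul_nonsing_inv _ hdet, Matrix.mul_one]
    have hd := hSp.det_pos
    have h0 := hSp.diag_pos (i := 0)
    have h1 := hSp.diag_pos (i := 1)
    have h10 : S 1 0 = star (S 0 1) := (hS.apply 1 0).symm
    have e00 := congrFun (congrFun hSS 0) 0
    have e01 := congrFun (congrFun hSS 0) 1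
    have e11 := congrFun (congrFun hSS 1) 1
    rw [Matrix.det_fin_two] at hd
    simp only [Matrix.mul_apply, Fin.sum_univ_two, hG] at e00 e01 e11
    obtain ⟨p, hp⟩ : ∃ p : ℝ, S 0 0 = p :=
      ⟨(S 0 0).re, Complex.ext rfl (by simpa using (Complex.lt_def.1 h0).2.symm)⟩
    obtain ⟨q, hq⟩ : ∃ q : ℝ, S 1 1 = q :=
      ⟨(S 1 1).re, Complex.ext rfl (by simpa using (Complex.lt_def.1 h1).2.symm)⟩
    obtain ⟨x, y, hxy⟩ : ∃ x y : ℝ, S 0 1 = ⟨x, y⟩ := ⟨_, _, rfl⟩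
    rw [hp] at h0
    rw [hq] at h1
    have hp0 : 0 < p := by exact_mod_cast h0
    have hq0 : 0 < q := by exact_mod_cast h1
    rw [hp, hq, h10, hxy] at hd
    rw [hp, h10, hxy] at e00
    rw [hp, hq, hxy] at e01
    rw [hq, h10, hxy] at e11
    have d := (Complex.lt_def.1 hd).1
    have f00 := congrArg Complex.re e00
    have f11 := congrArg Complex.re e11
    have g01 := congrArg Complex.re e01
    have f01 := congrArg Complex.im e01
    simp [← Complex.ofReal_pow, ← Complex.ofReal_inv] at d f00 f11 g01 f01
    have hpq : p = q := by nlinarith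
    subst hpq
    have hx : x = 0 := by
      have : x * p = 0 := by linarith
      rcases mul_eq_zero.1 this with h | h
      · exact h
      · exact absurd h hp0.ne'
    subst hx
    have k1 : (p ^ 2 + y ^ 2) * c ^ 2 = 1 := by
      field_simp at f00
      linarith
    have k2 : 2 * p * y * c ^ 2 = s := by
      field_simp at f01
      linarith
    have k3 : (p ^ 2 - y ^ 2) * c = 1 := by
      have hpos : 0 < (p ^ 2 - y ^ 2) * c := mul_pos (by nlinarith) hc
      have hsq : (((p ^ 2 - y ^ 2) * c) ^ 2 - 1) * c ^ 2 = 0 := by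
        subst k2
        linear_combination ((p ^ 2 + y ^ 2) * c ^ 2 + 1) * k1 - hsc
      have : ((p ^ 2 - y ^ 2) * c) ^ 2 - 1 = 0 := by
        rcases mul_eq_zero.1 hsq with h | h
        · exact h
        · exact absurd h (by positivity)
      nlinarith
    have m1 : p - y * s = c * p := by
      rw [← k2]
      linear_combination -p * k1 + p * c * k3
    have m2 : p * s - y = c * y := by
      rw [← k2]
      linear_combination y * k1 + y * c * k3
    have m1C : (p : ℂ) - y * s = c * p := by exact_mod_cast m1
    have m2C : (p : ℂ) * s - y = c * y := by exact_mod_cast m2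
    have hz01 : S 0 1 = Complex.I * y := by rw [hxy]; apply Complex.ext <;> simp
    have hz10 : S 1 0 = -(Complex.I * y) := by rw [h10, hz01]; simp
    rw [hz]
    ext i j
    fin_cases i <;> fin_cases j <;>
      simp [Matrix.mul_apply, Fin.sum_univ_two, hp, hq, hz01, hz10] <;> field_simp
    · linear_combination m1C + (y : ℂ) * s * hI
    · linear_combination m2C
    · linear_combination m2C
    · linear_combination -m1C - (y : ℂ) * s * hI
  · refine ⟨![1 + c, Complex.I * s], ?_, ?_⟩
    · intro h
      have : (1 + c : ℂ) = 0 := congrFun h 0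
      have h2 : (1 + c : ℝ) = 0 := by exact_mod_cast this
      linarith
    · rw [hz]
      ext i
      fin_cases i <;> simp [Matrix.mulVec, dotProduct, Fin.sum_univ_two] <;> field_simp
      · linear_combination -hscC + (s : ℂ) ^ 2 * hI
      · ring
  · refine ⟨![Complex.I * s, -(1 + c)], ?_, ?_⟩
    · intro h
      have : (-(1 + c) : ℂ) = 0 := congrFun h 1
      have h2 : (-(1 + c) : ℝ) = 0 := by exact_mod_cast this
      linarith
    · rw [hz]
      ext i
      fin_cases i <;> simp [Matrix.mulVec, dotProduct, Fin.sum_univ_two] <;> field_simp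
      · ring
      · linear_combination -hscC + (s : ℂ) ^ 2 * hI
end
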